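/- Let a be a real number with 2 < a < 3. Then for every real x > 0, Γ(a,x) < g_a(x) < G_a(x). -/

import Mathlib

/-!
Write `f t = t ^ (a - 1)` and let `M c x` be the mean of `f` over `[x, x + c]`. Since `b_a` is
chosen so that `M b_a 0 = Γ(a)`, we have `G_a(x) = M b_a x * e ^ (-x)` and
`g_a(x) = (M 2 x - M 2 0 + Γ(a)) * e ^ (-x)`.

For `g_a < G_a` we need `M 2 x - M 2 0 < M b_a x - M b_a 0`. The derivative of `M c` is the secant
slope of `f` over `[x, x + c]`, which increases with `c` because `f` is strictly convex, and
`b_a > 2` follows from the log-convexity of `Γ`.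

For `Γ(a, ·) < g_a`, the difference `g_a - Γ(a, ·)` vanishes at `0` and at infinity, and its
derivative is `e ^ (-x)` times the sum of a constant and half the error of the trapezoidal rule for
`f` on `[x, x + 2]`. That error is strictly decreasing, its derivative being the error for the
strictly concave function `f'`, so `g_a - Γ(a, ·)` first increases strictly and then decreases
strictly.
-/

open Real Filter Set

/-- Upper incomplete gamma function `Γ(a,x) = ∫_x^∞ t^(a-1) e^(-t) dt`. -/
noncomputable def incGamma (a x : ℝ) : ℝ := ∫ t in Set.Ioi x, t ^ (a - 1) * Real.exp (-t)

/-- `b_a = Γ(a+1)^(1/(a-1))` for `a ≠ 1`, and `b_1 = e^(1-γ)`. -/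
noncomputable def bCoef (a : ℝ) : ℝ :=
  if a = 1 then Real.exp (1 - Real.eulerMascheroniConstant)
  else Real.Gamma (a + 1) ^ (1 / (a - 1))

/-- `G_a(x) = ((x+b_a)^a - x^a) e^(-x) / (a b_a)`. -/
noncomputable def Gbound (a x : ℝ) : ℝ :=
  ((x + bCoef a) ^ a - x ^ a) * Real.exp (-x) / (a * bCoef a)

/-- `g_a(x) = (((x+2)^a - x^a - 2^a)/(2a) + Γ(a)) e^(-x)`. -/
noncomputable def gbound (a x : ℝ) : ℝ :=
  (((x + 2) ^ a - x ^ a - (2 : ℝ) ^ a) / (2 * a) + Real.Gamma a) * Real.exp (-x)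

/-- `g_a^lo(x) = x^a e^(-x) (x-a-1) / ((x-a)^2 + a)`. -/
noncomputable def gLo (a x : ℝ) : ℝ :=
  x ^ a * Real.exp (-x) * (x - a - 1) / ((x - a) ^ 2 + a)

/-- `g_a^hi(x) = x^a e^(-x) / (x-a)`. -/
noncomputable def gHi (a x : ℝ) : ℝ := x ^ a * Real.exp (-x) / (x - a)

open MeasureTheory
open scoped Topology

section MovingAverage

/-- The moving average of `f` over the window `[x, x + c]`; it is `0` for `c = 0`. -/
noncomputable def movingAverage (f : ℝ → ℝ) (c x : ℝ) : ℝ := (∫ t in x..x + c, f t) / c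

variable {f : ℝ → ℝ} {a b c : ℝ}

lemma hasDerivAt_movingAverage (hf : Continuous f) (c x : ℝ) :
    HasDerivAt (movingAverage f c) ((f (x + c) - f x) / c) x := by
  have hprim (y : ℝ) : HasDerivAt (fun u ↦ ∫ t in (0 : ℝ)..u, f t) (f y) y :=
    (hf.integral_hasStrictDerivAt 0 y).hasDerivAt
  have hwindow : movingAverage f c =
      fun u ↦ ((∫ t in (0 : ℝ)..u + c, f t) - ∫ t in (0 : ℝ)..u, f t) / c := by
    funext u
    rw [movingAverage, intervalIntegral.integral_interval_sub_left (hf.intervalIntegrable _ _)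
      (hf.intervalIntegrable _ _)]
  rw [hwindow]
  exact (((hprim (x + c)).comp_add_const x c).sub (hprim x)).div_const c

lemma continuous_movingAverage (hf : Continuous f) (c : ℝ) : Continuous (movingAverage f c) :=
  continuous_iff_continuousAt.2 fun x ↦ (hasDerivAt_movingAverage hf c x).continuousAt

lemma strictMonoOn_movingAverage_sub (hf : Continuous f) (hconv : StrictConvexOn ℝ (Ici a) f)
    (hc : 0 < c) (hcb : c < b) :
    StrictMonoOn (fun x ↦ movingAverage f b x - movingAverage f c x) (Ici a) := by
  have hderiv (x : ℝ) :=
    (hasDerivAt_movingAverage hf b x).sub (hasDerivAt_movingAverage hf c x)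
  refine strictMonoOn_of_deriv_pos (convex_Ici a)
    (fun x _ ↦ (hderiv x).continuousAt.continuousWithinAt) fun x hx ↦ ?_
  rw [interior_Ici, mem_Ioi] at hx
  have hsecant : (f (x + c) - f x) / (x + c - x) < (f (x + b) - f x) / (x + b - x) :=
    hconv.secant_strict_mono hx.le (mem_Ici.2 (by linarith)) (mem_Ici.2 (by linarith))
      (by linarith) (by linarith) (by linarith)
  rw [add_sub_cancel_left, add_sub_cancel_left] at hsecant
  exact (hderiv x).deriv ▸ sub_pos.2 hsecant

end MovingAverage

section TrapezoidalRule

variable {f f' : ℝ → ℝ} {a b c : ℝ}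

lemma integral_chord (f : ℝ → ℝ) (hab : a ≠ b) :
    ∫ t in a..b, (f a + (f b - f a) / (b - a) * (t - a)) = (b - a) / 2 * (f a + f b) := by
  have hba : b - a ≠ 0 := sub_ne_zero.2 hab.symm
  rw [intervalIntegral.integral_add intervalIntegrable_const
      (Continuous.intervalIntegrable (by fun_prop) _ _), intervalIntegral.integral_const_mul,
    intervalIntegral.integral_comp_sub_right (fun t ↦ t) a,
    intervalIntegral.integral_const, integral_id, smul_eq_mul]
  field_simp
  ring

lemma chord_lt_of_strictConcaveOn {t : ℝ} (hf : StrictConcaveOn ℝ (Icc a b) f)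
    (ht : t ∈ Ioo a b) : f a + (f b - f a) / (b - a) * (t - a) < f t := by
  have hab : a < b := ht.1.trans ht.2
  have hsecant := hf.secant_strict_mono (left_mem_Icc.2 hab.le) (Ioo_subset_Icc_self ht)
    (right_mem_Icc.2 hab.le) ht.1.ne' hab.ne' ht.2
  rw [lt_div_iff₀ (sub_pos.2 ht.1)] at hsecant
  linarith

lemma trapezoidal_error_neg_of_strictConcaveOn (hab : a < b) (hf : StrictConcaveOn ℝ (Icc a b) f)
    (hcont : ContinuousOn f (Icc a b)) : trapezoidal_error f 1 a b < 0 := by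
  have hchord : ∀ t ∈ Ioo a b, f a + (f b - f a) / (b - a) * (t - a) < f t :=
    fun t ht ↦ chord_lt_of_strictConcaveOn hf ht
  rw [trapezoidal_error, trapezoidal_integral_one, ← integral_chord f hab.ne, sub_neg]
  refine intervalIntegral.integral_lt_integral_of_continuousOn_of_le_of_exists_lt hab
    (by fun_prop) hcont (fun t ht ↦ ?_) ?_
  · rcases ht.2.eq_or_lt with rfl | htb
    · rw [div_mul_cancel₀ _ (sub_ne_zero.2 hab.ne'), add_sub_cancel]
    · exact (hchord t ⟨ht.1, htb⟩).le
  · obtain ⟨t, ht⟩ := exists_between hab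
    exact ⟨t, Ioo_subset_Icc_self ht, hchord t ht⟩

lemma trapezoidal_error_eq_movingAverage (f : ℝ → ℝ) (c x : ℝ) :
    trapezoidal_error f 1 x (x + c) = c * ((f x + f (x + c)) / 2 - movingAverage f c x) := by
  rcases eq_or_ne c 0 with rfl | hc
  · rw [add_zero, trapezoidal_error_eq, zero_mul]
  rw [trapezoidal_error, trapezoidal_integral_one, movingAverage]
  field_simp
  ring

lemma hasDerivAt_trapezoidal_error (hf : ∀ x, HasDerivAt f (f' x) x) (hf' : Continuous f')
    (c x : ℝ) :
    HasDerivAt (fun y ↦ trapezoidal_error f 1 y (y + c)) (trapezoidal_error f' 1 x (x + c)) x := by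
  have hfcont : Continuous f := continuous_iff_continuousAt.2 fun y ↦ (hf y).continuousAt
  have hftc : ∫ t in x..x + c, f' t = f (x + c) - f x :=
    intervalIntegral.integral_eq_sub_of_hasDerivAt (fun t _ ↦ hf t) (hf'.intervalIntegrable _ _)
  simp_rw [trapezoidal_error_eq_movingAverage]
  rw [movingAverage, hftc]
  exact ((((hf x).add ((hf (x + c)).comp_add_const x c)).div_const 2).sub
    (hasDerivAt_movingAverage hfcont c x)).const_mul c

lemma strictAntiOn_trapezoidal_error (hf : ∀ x, HasDerivAt f (f' x) x) (hf' : Continuous f')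
    (hconc : StrictConcaveOn ℝ (Ici a) f') (hc : 0 < c) :
    StrictAntiOn (fun x ↦ trapezoidal_error f 1 x (x + c)) (Ici a) := by
  have hderiv (x : ℝ) := hasDerivAt_trapezoidal_error hf hf' c x
  refine strictAntiOn_of_deriv_neg (convex_Ici a)
    (fun x _ ↦ (hderiv x).continuousAt.continuousWithinAt) fun x hx ↦ ?_
  rw [interior_Ici] at hx
  rw [(hderiv x).deriv]
  exact trapezoidal_error_neg_of_strictConcaveOn (lt_add_of_pos_right x hc)
    (hconc.subset (Icc_subset_Ici_self.trans (Ici_subset_Ici.2 hx.le)) (convex_Icc _ _))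
    hf'.continuousOn

end TrapezoidalRule

section UnimodalFunctions

variable {D w R : ℝ → ℝ} {c l x : ℝ}

lemma lt_of_strictAntiOn_of_tendsto_atTop (hD : StrictAntiOn D (Ici c))
    (hlim : Tendsto D atTop (𝓝 l)) : l < D c := by
  have hsucc : c < c + 1 := lt_add_one c
  refine lt_of_le_of_lt (le_of_tendsto hlim ?_) (hD self_mem_Ici hsucc.le hsucc)
  filter_upwards [eventually_ge_atTop (c + 1)] with z hz
  exact hD.antitoneOn hsucc.le (hsucc.le.trans hz) hz

lemma min_lt_of_hasDerivAt_mul_strictAntiOn (hcont : ContinuousOn D (Ici c))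
    (hderiv : ∀ z ∈ Ioi c, HasDerivAt D (w z * R z) z) (hw : ∀ z ∈ Ioi c, 0 < w z)
    (hR : StrictAntiOn R (Ioi c)) (hlim : Tendsto D atTop (𝓝 l)) (hx : c < x) :
    min (D c) l < D x := by
  rcases le_or_gt 0 (R x) with hRx | hRx
  · have hmono : StrictMonoOn D (Icc c x) := by
      refine strictMonoOn_of_deriv_pos (convex_Icc c x) (hcont.mono Icc_subset_Ici_self)
        fun z hz ↦ ?_
      rw [interior_Icc] at hz
      rw [(hderiv z hz.1).deriv]
      exact mul_pos (hw z hz.1) (hRx.trans_lt (hR hz.1 hx hz.2))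
    exact min_lt_of_left_lt (hmono (left_mem_Icc.2 hx.le) (right_mem_Icc.2 hx.le) hx)
  · have hanti : StrictAntiOn D (Ici x) := by
      refine strictAntiOn_of_deriv_neg (convex_Ici x) (hcont.mono (Ici_subset_Ici.2 hx.le))
        fun z hz ↦ ?_
      rw [interior_Ici] at hz
      have hcz : z ∈ Ioi c := hx.trans hz
      rw [(hderiv z hcz).deriv]
      exact mul_neg_of_pos_of_neg (hw z hcz) ((hR hx hcz hz).trans hRx)
    exact min_lt_of_right_lt (lt_of_strictAntiOn_of_tendsto_atTop hanti hlim)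

end UnimodalFunctions

section GammaFunction

lemma Gamma_five_halves_lt_sqrt_two : Gamma (5 / 2) < √2 := by
  have hval : Gamma (5 / 2) = 3 / 4 * √π := by
    have h := Gamma_nat_add_half 2
    norm_num [Nat.doubleFactorial] at h
    rw [h]
    ring
  rw [hval]
  refine lt_sqrt_of_sq_lt ?_
  rw [mul_pow, sq_sqrt pi_pos.le]
  linarith [pi_lt_d2]

-- By log-convexity the slope of `log Γ` on `[3, s + 1]` is at least its slope on `[5 / 2, 3]`,
-- which exceeds `log 2`. The interval `[2, 3]` would only give slope `log 2`.
lemma two_rpow_lt_Gamma_add_one {s : ℝ} (hs : 2 < s) : (2 : ℝ) ^ (s - 1) < Gamma (s + 1) := by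
  have hGamma : 0 < Gamma (s + 1) := Gamma_pos_of_pos (by linarith)
  have hlog : log (Gamma (5 / 2)) < log 2 / 2 := by
    rw [← log_sqrt zero_le_two]
    exact log_lt_log (Gamma_pos_of_pos (by norm_num)) Gamma_five_halves_lt_sqrt_two
  have hslope : (log 2 - log (Gamma (5 / 2))) / (3 - 5 / 2) ≤
      (log (Gamma (s + 1)) - log 2) / (s + 1 - 3) := by
    have h := convexOn_log_Gamma.slope_mono_adjacent (x := 5 / 2) (y := 3) (z := s + 1)
      (mem_Ioi.2 (by norm_num)) (mem_Ioi.2 (by linarith)) (by norm_num) (by linarith)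
    simpa [Gamma_ofNat_eq_factorial] using h
  have hlog_two : log 2 < (log 2 - log (Gamma (5 / 2))) / (3 - 5 / 2) := by
    rw [lt_div_iff₀ (by norm_num)]
    linarith
  have hend := hlog_two.trans_le hslope
  rw [lt_div_iff₀ (by linarith)] at hend
  rw [← log_lt_log_iff (by positivity) hGamma, log_rpow two_pos]
  linarith

lemma bCoef_pos {a : ℝ} (ha : -1 < a) : 0 < bCoef a := by
  rw [bCoef]
  split_ifs
  · exact exp_pos _
  · exact rpow_pos_of_pos (Gamma_pos_of_pos (by linarith)) _

lemma bCoef_rpow_sub_one {a : ℝ} (ha : -1 < a) (ha1 : a ≠ 1) :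
    bCoef a ^ (a - 1) = Gamma (a + 1) := by
  rw [bCoef, if_neg ha1, one_div,
    rpow_inv_rpow (Gamma_pos_of_pos (by linarith)).le (sub_ne_zero.2 ha1)]

lemma two_lt_bCoef {a : ℝ} (ha : 2 < a) : 2 < bCoef a := by
  have h := two_rpow_lt_Gamma_add_one ha
  rw [← bCoef_rpow_sub_one (by linarith) (by linarith)] at h
  exact (rpow_lt_rpow_iff zero_le_two (bCoef_pos (by linarith)).le (by linarith)).1 h

end GammaFunction

section IncompleteGamma

variable {a x : ℝ}

lemma integrableOn_rpow_mul_exp_neg (ha : 0 < a) :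
    IntegrableOn (fun t : ℝ ↦ t ^ (a - 1) * exp (-t)) (Ioi 0) := by
  simpa only [mul_comm] using GammaIntegral_convergent ha

lemma incGamma_zero (ha : 0 < a) : incGamma a 0 = Gamma a := by
  rw [incGamma, Gamma_eq_integral ha]
  simp only [mul_comm]

lemma incGamma_eq_Gamma_sub_integral (ha : 0 < a) (hx : 0 ≤ x) :
    incGamma a x = Gamma a - ∫ t in (0 : ℝ)..x, t ^ (a - 1) * exp (-t) := by
  rw [← intervalIntegral.integral_Ioi_sub_Ioi (integrableOn_rpow_mul_exp_neg ha) hx,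
    ← incGamma_zero ha, incGamma, incGamma, sub_sub_cancel]

lemma intervalIntegrable_rpow_mul_exp_neg (ha : 0 < a) (x y : ℝ) :
    IntervalIntegrable (fun t : ℝ ↦ t ^ (a - 1) * exp (-t)) volume x y :=
  (intervalIntegral.intervalIntegrable_rpow' (by linarith)).mul_continuousOn (by fun_prop)

lemma continuousOn_incGamma (ha : 0 < a) : ContinuousOn (incGamma a) (Ici 0) :=
  (continuous_const.sub (intervalIntegral.continuous_primitive
    (intervalIntegrable_rpow_mul_exp_neg ha) 0)).continuousOn.congr
    fun _ hy ↦ incGamma_eq_Gamma_sub_integral ha hy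

lemma hasDerivAt_incGamma (ha : 0 < a) (hx : 0 < x) :
    HasDerivAt (incGamma a) (-(x ^ (a - 1) * exp (-x))) x := by
  have hcont : ContinuousOn (fun t : ℝ ↦ t ^ (a - 1) * exp (-t)) (Ioi 0) := fun t ht ↦
    ((continuousAt_rpow_const t _ (Or.inl ht.ne')).mul (by fun_prop)).continuousWithinAt
  refine ((intervalIntegral.integral_hasDerivAt_right (intervalIntegrable_rpow_mul_exp_neg ha 0 x)
    (hcont.stronglyMeasurableAtFilter isOpen_Ioi x hx)
    (hcont.continuousAt (Ioi_mem_nhds hx))).const_sub (Gamma a)).congr_of_eventuallyEq ?_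
  filter_upwards [Ioi_mem_nhds hx] with y hy
  exact incGamma_eq_Gamma_sub_integral ha (le_of_lt hy)

lemma tendsto_incGamma_atTop (a : ℝ) : Tendsto (incGamma a) atTop (𝓝 0) :=
  tendsto_integral_Ioi_zero tendsto_id

end IncompleteGamma

section Bounds

variable {a x : ℝ}

lemma movingAverage_rpow (ha : 0 < a) (c x : ℝ) :
    movingAverage (fun t ↦ t ^ (a - 1)) c x = ((x + c) ^ a - x ^ a) / (a * c) := by
  rw [movingAverage, integral_rpow (Or.inl (by linarith)), sub_add_cancel, div_div]

lemma movingAverage_rpow_bCoef_zero (ha : 0 < a) (ha1 : a ≠ 1) :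
    movingAverage (fun t ↦ t ^ (a - 1)) (bCoef a) 0 = Gamma a := by
  have hb : bCoef a ≠ 0 := (bCoef_pos (by linarith)).ne'
  rw [movingAverage_rpow ha, zero_add, zero_rpow ha.ne', sub_zero, mul_comm a, ← div_div,
    ← rpow_sub_one hb, bCoef_rpow_sub_one (by linarith) ha1, Gamma_add_one ha.ne',
    mul_div_cancel_left₀ _ ha.ne']

lemma Gbound_eq_movingAverage (ha : 0 < a) (x : ℝ) :
    Gbound a x = movingAverage (fun t ↦ t ^ (a - 1)) (bCoef a) x * exp (-x) := by
  rw [movingAverage_rpow ha, Gbound, mul_div_right_comm]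

lemma gbound_eq_movingAverage (ha : 0 < a) (x : ℝ) :
    gbound a x = (movingAverage (fun t ↦ t ^ (a - 1)) 2 x -
      movingAverage (fun t ↦ t ^ (a - 1)) 2 0 + Gamma a) * exp (-x) := by
  rw [movingAverage_rpow ha, movingAverage_rpow ha, gbound, zero_add, zero_rpow ha.ne']
  ring

lemma gbound_zero (ha : 0 < a) : gbound a 0 = Gamma a := by
  simp [gbound_eq_movingAverage ha]

lemma continuous_gbound (ha : 1 ≤ a) : Continuous (gbound a) := by
  have hrpow : Continuous fun t : ℝ ↦ t ^ (a - 1) := continuous_rpow_const (by linarith)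
  have hM := continuous_movingAverage hrpow 2
  rw [funext (gbound_eq_movingAverage (by linarith : 0 < a))]
  fun_prop

lemma tendsto_add_rpow_mul_exp_neg_atTop (a c : ℝ) :
    Tendsto (fun x : ℝ ↦ (x + c) ^ a * exp (-x)) atTop (𝓝 0) := by
  have hshift := ((tendsto_rpow_mul_exp_neg_mul_atTop_nhds_zero a 1 one_pos).comp
    (tendsto_atTop_add_const_right atTop c tendsto_id)).mul_const (exp c)
  rw [zero_mul] at hshift
  refine hshift.congr fun x ↦ ?_
  simp only [Function.comp, id, mul_assoc, ← exp_add]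
  ring_nf

lemma tendsto_gbound_atTop (a : ℝ) : Tendsto (gbound a) atTop (𝓝 0) := by
  have h := (((tendsto_add_rpow_mul_exp_neg_atTop a 2).sub
    (tendsto_add_rpow_mul_exp_neg_atTop a 0)).div_const (2 * a)).add
    (tendsto_exp_neg_atTop_nhds_zero.const_mul (Gamma a - 2 ^ a / (2 * a)))
  rw [sub_zero, zero_div, mul_zero, add_zero] at h
  refine h.congr fun x ↦ ?_
  rw [gbound, add_zero]
  ring

lemma hasDerivAt_gbound_sub_incGamma (ha : 1 ≤ a) (hx : 0 < x) :
    HasDerivAt (fun y ↦ gbound a y - incGamma a y)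
      (exp (-x) * (trapezoidal_error (fun t ↦ t ^ (a - 1)) 1 x (x + 2) / 2 +
        (movingAverage (fun t ↦ t ^ (a - 1)) 2 0 - Gamma a))) x := by
  have ha0 : 0 < a := by linarith
  have hM := hasDerivAt_movingAverage (continuous_rpow_const (by linarith : 0 ≤ a - 1)) 2 x
  have hexp : HasDerivAt (fun y : ℝ ↦ exp (-y)) (exp (-x) * (-1)) x := (hasDerivAt_neg x).exp
  rw [funext (gbound_eq_movingAverage ha0), trapezoidal_error_eq_movingAverage]
  refine ((((hM.sub_const _).add_const _).mul hexp).sub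
    (hasDerivAt_incGamma ha0 hx)).congr_deriv ?_
  ring

lemma strictAntiOn_trapezoidal_error_rpow {p c : ℝ} (hp1 : 1 < p) (hp2 : p < 2) (hc : 0 < c) :
    StrictAntiOn (fun x ↦ trapezoidal_error (fun t ↦ t ^ p) 1 x (x + c)) (Ici 0) := by
  have hconc : StrictConcaveOn ℝ (Ici 0) fun t : ℝ ↦ p * t ^ (p - 1) := by
    refine ⟨convex_Ici 0, fun x hx y hy hxy α β hα hβ hαβ ↦ ?_⟩
    have h := mul_lt_mul_of_pos_left ((strictConcaveOn_rpow (by linarith : 0 < p - 1)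
      (by linarith)).2 hx hy hxy hα hβ hαβ) (by linarith : 0 < p)
    simp only [smul_eq_mul] at h ⊢
    linarith
  exact strictAntiOn_trapezoidal_error (fun x ↦ hasDerivAt_rpow_const (Or.inr hp1.le))
    (continuous_const.mul (continuous_rpow_const (by linarith))) hconc hc

theorem incGamma_lt_gbound (ha2 : 2 < a) (ha3 : a < 3) (hx : 0 < x) :
    incGamma a x < gbound a x := by
  have ha0 : 0 < a := by linarith
  have ha1 : 1 ≤ a := by linarith
  have hanti : StrictAntiOn (fun z ↦ trapezoidal_error (fun t ↦ t ^ (a - 1)) 1 z (z + 2) / 2 +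
      (movingAverage (fun t ↦ t ^ (a - 1)) 2 0 - Gamma a)) (Ioi 0) := fun y hy z hz hyz ↦ by
    have herror := strictAntiOn_trapezoidal_error_rpow (p := a - 1) (by linarith) (by linarith)
      two_pos (mem_Ici_of_Ioi hy) (mem_Ici_of_Ioi hz) hyz
    dsimp only at herror ⊢
    linarith
  have hlim : Tendsto (fun y ↦ gbound a y - incGamma a y) atTop (𝓝 0) := by
    simpa using (tendsto_gbound_atTop a).sub (tendsto_incGamma_atTop a)
  have hmin := min_lt_of_hasDerivAt_mul_strictAntiOn
    ((continuous_gbound ha1).continuousOn.sub (continuousOn_incGamma ha0))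
    (fun z hz ↦ hasDerivAt_gbound_sub_incGamma ha1 hz) (fun z _ ↦ exp_pos (-z)) hanti hlim hx
  rw [Pi.sub_apply, Pi.sub_apply, gbound_zero ha0, incGamma_zero ha0, sub_self, min_self] at hmin
  exact sub_pos.1 hmin

theorem gbound_lt_Gbound (ha : 2 < a) (hx : 0 < x) : gbound a x < Gbound a x := by
  have ha0 : 0 < a := by linarith
  have hmono := strictMonoOn_movingAverage_sub
    (continuous_rpow_const (by linarith)) (strictConvexOn_rpow (p := a - 1) (by linarith))
    two_pos (two_lt_bCoef ha) self_mem_Ici hx.le hx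
  simp only [movingAverage_rpow_bCoef_zero ha0 (by linarith : a ≠ 1)] at hmono
  rw [gbound_eq_movingAverage ha0, Gbound_eq_movingAverage ha0]
  exact mul_lt_mul_of_pos_right (by linarith) (exp_pos _)

end Bounds

theorem stmt4 (a : ℝ) (ha1 : 2 < a) (ha2 : a < 3) :
    ∀ x : ℝ, 0 < x → incGamma a x < gbound a x ∧ gbound a x < Gbound a x :=
  fun _ hx => ⟨incGamma_lt_gbound ha1 ha2 hx, gbound_lt_Gbound ha1 hx⟩
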